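/- arXiv:1501.00872 — 2 statements merged into one kernel-verified Lean document; each statement's English description precedes it below -/
import Mathlib

section
/- Let T : ℕ → ℚ⟦X⟧ be the sequence of formal power series defined by T 0 = 0 and T (k+1) = X·(1 − T k)⁻¹. Then for every natural number k ≥ 1, one has (T k − T (k−1))·F_k·F_{k+1} = X^k in ℚ⟦X⟧, where the Fibonacci polynomials are regarded as formal power series. -/
open PowerSeries

/-- The Fibonacci polynomials: `F 0 = 0`, `F 1 = 1`, `F (k+2) = F (k+1) - X * F k`. -/
noncomputable def fibPoly : ℕ → Polynomial ℤ
  | 0 => 0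
  | 1 => 1
  | (k + 2) => fibPoly (k + 1) - Polynomial.X * fibPoly k

/-- The Fibonacci polynomials regarded as formal power series over `ℚ`. -/
noncomputable def fibPS (k : ℕ) : PowerSeries ℚ :=
  (((fibPoly k).map (Int.castRingHom ℚ) : Polynomial ℚ) : PowerSeries ℚ)

/-- The generating function of ordered trees of height at most `k`:
`T 0 = 0`, `T (k+1) = X * (1 - T k)⁻¹`. -/
noncomputable def treeGF : ℕ → PowerSeries ℚ
  | 0 => 0
  | (k + 1) => PowerSeries.X * (1 - treeGF k)⁻¹

/-! Read `T` as the continued fraction `x / (1 - x / (1 - ⋯))`: its convergents are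
`T k = x * F k / F (k + 1)`. The difference of consecutive convergents therefore has numerator
`x * (F (k + 1) ^ 2 - F k * F (k + 2))`, which the Cassini identity evaluates to `x ^ (k + 1)`.
With denominators cleared, the argument makes sense in every commutative ring. -/

section CommRing

variable {R : Type*} [CommRing R]

/-- The value at `x : R` of the `k`-th Fibonacci polynomial, used to carry identities between
Fibonacci polynomials to an arbitrary commutative ring. It is encoded by `Polynomial.eval₂`, since
`Polynomial.aeval` would depend on a choice of `ℤ`-algebra structure on `R`. -/
noncomputable def fibEval (x : R) (k : ℕ) : R :=
  (fibPoly k).eval₂ (Int.castRingHom R) x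

theorem fibEval_zero (x : R) : fibEval x 0 = 0 := by
  simp [fibEval, fibPoly]

theorem fibEval_one (x : R) : fibEval x 1 = 1 := by
  simp [fibEval, fibPoly]

theorem fibEval_add_two (x : R) (k : ℕ) :
    fibEval x (k + 2) = fibEval x (k + 1) - x * fibEval x k := by
  simp [fibEval, fibPoly]

theorem fibEval_cassini (x : R) (k : ℕ) :
    fibEval x (k + 1) ^ 2 - fibEval x k * fibEval x (k + 2) = x ^ k := by
  induction k with
  | zero => simp [fibEval_zero, fibEval_one]
  | succ k ih =>
    calc fibEval x (k + 2) ^ 2 - fibEval x (k + 1) * fibEval x (k + 3)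
        = x * (fibEval x (k + 1) ^ 2 - fibEval x k * fibEval x (k + 2)) := by
          rw [fibEval_add_two x (k + 1), fibEval_add_two x k]
          ring
      _ = x ^ (k + 1) := by rw [ih, pow_succ']

variable {x : R} {t : ℕ → R}

theorem convergent_mul_fibEval_succ (ht₀ : t 0 = 0) (ht : ∀ k, t (k + 1) * (1 - t k) = x)
    (k : ℕ) : t k * fibEval x (k + 1) = x * fibEval x k := by
  induction k with
  | zero => simp [ht₀, fibEval_zero]
  | succ k ih =>
    calc t (k + 1) * fibEval x (k + 2)
        = t (k + 1) * (fibEval x (k + 1) - t k * fibEval x (k + 1)) := by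
          rw [fibEval_add_two, ih]
      _ = t (k + 1) * (1 - t k) * fibEval x (k + 1) := by ring
      _ = x * fibEval x (k + 1) := by rw [ht]

theorem treeGF_diff_mul_fib_general (ht₀ : t 0 = 0) (ht : ∀ k, t (k + 1) * (1 - t k) = x)
    (k : ℕ) :
    (t (k + 1) - t k) * fibEval x (k + 1) * fibEval x (k + 2) = x ^ (k + 1) := by
  calc (t (k + 1) - t k) * fibEval x (k + 1) * fibEval x (k + 2)
      = t (k + 1) * fibEval x (k + 2) * fibEval x (k + 1) -
          t k * fibEval x (k + 1) * fibEval x (k + 2) := by ring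
    _ = x * fibEval x (k + 1) * fibEval x (k + 1) - x * fibEval x k * fibEval x (k + 2) := by
        rw [convergent_mul_fibEval_succ ht₀ ht (k + 1), convergent_mul_fibEval_succ ht₀ ht k]
    _ = x * (fibEval x (k + 1) ^ 2 - fibEval x k * fibEval x (k + 2)) := by ring
    _ = x ^ (k + 1) := by rw [fibEval_cassini, pow_succ']

end CommRing

theorem fibPS_eq_fibEval_X (k : ℕ) : fibPS k = fibEval PowerSeries.X k := by
  rw [fibPS, fibEval, ← Polynomial.eval₂_C_X_eq_coe, Polynomial.eval₂_map,
    RingHom.eq_intCast' (PowerSeries.C.comp (Int.castRingHom ℚ))]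

theorem constantCoeff_treeGF (k : ℕ) : PowerSeries.constantCoeff (treeGF k) = 0 := by
  cases k <;> simp [treeGF]

theorem treeGF_succ_mul_one_sub (k : ℕ) :
    treeGF (k + 1) * (1 - treeGF k) = PowerSeries.X := by
  have constantCoeff_ne_zero : PowerSeries.constantCoeff (1 - treeGF k) ≠ 0 := by
    simp [constantCoeff_treeGF]
  rw [treeGF, mul_assoc, PowerSeries.inv_mul_cancel _ constantCoeff_ne_zero, mul_one]

theorem treeGF_diff_mul_fib (k : ℕ) (hk : 1 ≤ k) :
    (treeGF k - treeGF (k - 1)) * fibPS k * fibPS (k + 1) = PowerSeries.X ^ k := by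
  obtain ⟨n, rfl⟩ := Nat.exists_eq_add_of_le' hk
  simpa only [fibPS_eq_fibEval_X, Nat.add_sub_cancel] using
    treeGF_diff_mul_fib_general rfl treeGF_succ_mul_one_sub n
end

section
/- For every natural number k, the Fibonacci polynomials satisfy the identity (F_{2k+3}² − X^{2k+2})·F_{k+2} = (F_{k+3} − X·F_{k+1})·F_{k+2}²·F_{2k+2} in the polynomial ring ℤ[X]. (This is the denominator-cleared form of the equality between z²·(1 − (z^{k+1}/F_{2k+3})²)·F_{k+2}/(F_{k+3} − z·F_{k+1}) and the generating function z²·(F_{k+2}/F_{2k+3})²·F_{2k+2} of directed k-convex polyominoes.) -/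
open Polynomial

@[simp]
theorem fibPoly_zero : fibPoly 0 = 0 := rfl

@[simp]
theorem fibPoly_one : fibPoly 1 = 1 := rfl

theorem fibPoly_add_two (n : ℕ) : fibPoly (n + 2) = fibPoly (n + 1) - X * fibPoly n := rfl

theorem fibPoly_add (m n : ℕ) :
    fibPoly (m + n + 1) = fibPoly (m + 1) * fibPoly (n + 1) - X * fibPoly m * fibPoly n := by
  induction m generalizing n with
  | zero => simp
  | succ m ih =>
    calc
      fibPoly (m + 1 + n + 1) = fibPoly (m + (n + 1) + 1) := by congr 1; ring
      _ = fibPoly (m + 1) * fibPoly (n + 2) - X * fibPoly m * fibPoly (n + 1) := ih (n + 1)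
      _ = fibPoly (m + 2) * fibPoly (n + 1) - X * fibPoly (m + 1) * fibPoly n := by
        rw [fibPoly_add_two, fibPoly_add_two]
        ring

theorem fibPoly_two_mul_add_two (n : ℕ) :
    fibPoly (2 * n + 2) = fibPoly (n + 1) * (fibPoly (n + 2) - X * fibPoly n) := by
  calc
    fibPoly (2 * n + 2) = fibPoly (n + (n + 1) + 1) := by congr 1; ring
    _ = fibPoly (n + 1) * fibPoly (n + 2) - X * fibPoly n * fibPoly (n + 1) := fibPoly_add n (n + 1)
    _ = fibPoly (n + 1) * (fibPoly (n + 2) - X * fibPoly n) := by ring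

theorem fibPoly_add_one_sq_sub_fibPoly_mul_fibPoly_add_two (n : ℕ) :
    fibPoly (n + 1) ^ 2 - fibPoly n * fibPoly (n + 2) = X ^ n := by
  induction n with
  | zero => simp
  | succ n ih =>
    calc
      fibPoly (n + 2) ^ 2 - fibPoly (n + 1) * fibPoly (n + 3)
          = X * (fibPoly (n + 1) ^ 2 - fibPoly n * fibPoly (n + 2)) := by
        rw [fibPoly_add_two (n + 1), fibPoly_add_two n]
        ring
      _ = X ^ (n + 1) := by rw [ih, pow_succ']

theorem fibPoly_denominator_cleared (k : ℕ) :
    ((fibPoly (2 * k + 3)) ^ 2 - Polynomial.X ^ (2 * k + 2)) * fibPoly (k + 2) =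
      (fibPoly (k + 3) - Polynomial.X * fibPoly (k + 1)) *
        (fibPoly (k + 2)) ^ 2 * fibPoly (2 * k + 2) := by
  have factored : fibPoly (2 * k + 3) ^ 2 - X ^ (2 * k + 2) =
      fibPoly (2 * k + 2) * fibPoly (2 * k + 4) := by
    rw [← fibPoly_add_one_sq_sub_fibPoly_mul_fibPoly_add_two (2 * k + 2), sub_sub_cancel]
  have doubled : fibPoly (2 * k + 4) =
      fibPoly (k + 2) * (fibPoly (k + 3) - X * fibPoly (k + 1)) :=
    fibPoly_two_mul_add_two (k + 1)
  rw [factored, doubled]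
  ring
end
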